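/- (Theorem 1, STRICT guarantee.) In the crowd-teaching setting, fix ε > 0 with 0 < P0(h*)·ε < 2E and E > 0, where E = Σ_{h∈H} P0(h)·err(h,h*). Suppose some set A ⊆ X achieves E[err_L|A] ≤ P0(h*)·ε/2, and let OPT = min{|A| : A ⊆ X, E[err_L|A] ≤ P0(h*)·ε/2}. Let A_ℓ be the set produced by ℓ iterations of greedy maximization of F starting from the empty set. Then for every integer ℓ ≥ OPT · ln(2E/(P0(h*)·ε)), the set A_ℓ satisfies E[err_L|A_ℓ] ≤ ε. -/

import Mathlib

open scoped Classical BigOperators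

lemma aux_anti {X : Type*} (w : X → ℝ) (h0 : ∀ x, 0 ≤ w x) (h1 : ∀ x, w x ≤ 1)
    {S T : Finset X} (h : S ⊆ T) : ∏ x ∈ T, w x ≤ ∏ x ∈ S, w x := by
  rw [← Finset.prod_sdiff h]
  have a : ∏ x ∈ T \ S, w x ≤ 1 := Finset.prod_le_one (fun x _ => h0 x) (fun x _ => h1 x)
  have b : 0 ≤ ∏ x ∈ S, w x := Finset.prod_nonneg (fun x _ => h0 x)
  nlinarith

lemma aux_sub {X : Type*} (w : X → ℝ) (h0 : ∀ x, 0 ≤ w x) (h1 : ∀ x, w x ≤ 1)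
    (S B : Finset X) : ∏ x ∈ S, w x - ∏ x ∈ S ∪ B, w x ≤
      ∑ b ∈ B, (∏ x ∈ S, w x - ∏ x ∈ insert b S, w x) := by
  induction B using Finset.induction_on with
  | empty => simp
  | insert b B hb ih =>
    rw [Finset.sum_insert hb, Finset.union_insert]
    have key : ∏ x ∈ S ∪ B, w x - ∏ x ∈ insert b (S ∪ B), w x ≤
        ∏ x ∈ S, w x - ∏ x ∈ insert b S, w x := by
      by_cases hm : b ∈ S ∪ B
      · rw [Finset.insert_eq_of_mem hm]
        have := aux_anti w h0 h1 (Finset.subset_insert b S)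
        linarith
      · have hS : b ∉ S := fun h => hm (Finset.mem_union_left _ h)
        rw [Finset.prod_insert hm, Finset.prod_insert hS]
        have := aux_anti w h0 h1 (Finset.subset_union_left (s₁ := S) (s₂ := B))
        nlinarith [h1 b]
    linarith

/-- Theorem 1 (STRICT guarantee): if `OPT` is the size of the smallest teaching set
achieving expected error at most `P0(h*)·ε/2`, then greedy maximization of `F` run
for `ℓ ≥ OPT · ln(2E/(P0(h*)·ε))` steps yields a set with expected error at most `ε`. -/
theorem stmt_9
    {X H : Type*} [Fintype X] [Nonempty X] [Fintype H]
    (hyp : H → X → ℝ) (hnz : ∀ h x, hyp h x ≠ 0)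
    (y : X → ℝ) (hy : ∀ x, y x = 1 ∨ y x = -1)
    (hstar : H) (hreal : ∀ x, Real.sign (hyp hstar x) = y x)
    (P0 : H → ℝ) (hP0pos : ∀ h, 0 < P0 h) (hP0sum : ∑ h, P0 h = 1)
    (α : ℝ) (hα : 0 < α)
    (Q : H → Finset X → ℝ)
    (hQ : ∀ h A, Q h A =
      P0 h * ∏ x ∈ A.filter (fun x => y x ≠ Real.sign (hyp h x)),
        (1 / (1 + Real.exp (-(α * hyp h x * y x)))))
    (Z : Finset X → ℝ) (hZ : ∀ A, Z A = ∑ h, Q h A)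
    (P : H → Finset X → ℝ) (hP : ∀ h A, P h A = Q h A / Z A)
    (err : H → ℝ)
    (herr : ∀ h, err h =
      ((Finset.univ.filter
        (fun x => Real.sign (hyp h x) ≠ Real.sign (hyp hstar x))).card : ℝ)
        / (Fintype.card X : ℝ))
    (F : Finset X → ℝ)
    (hF : ∀ A, F A = ∑ h, (P0 h - Q h A) * err h)
    (Err : Finset X → ℝ)
    (hErr : ∀ A, Err A = ∑ h, P h A * err h)
    (Etot : ℝ) (hEtot : Etot = ∑ h, P0 h * err h) (hEpos : 0 < Etot)
    (ε : ℝ) (hε : 0 < ε) (hε0 : 0 < P0 hstar * ε) (hε2 : P0 hstar * ε < 2 * Etot)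
    (OPT : ℕ)
    (hOPT1 : ∃ B : Finset X, B.card = OPT ∧ Err B ≤ P0 hstar * ε / 2)
    (hOPT2 : ∀ B : Finset X, Err B ≤ P0 hstar * ε / 2 → OPT ≤ B.card)
    (A : ℕ → Finset X) (hA0 : A 0 = ∅)
    (hAgreedy : ∀ t : ℕ, ∃ xt : X, A (t + 1) = insert xt (A t) ∧
      ∀ x : X, F (insert x (A t)) ≤ F (insert xt (A t))) :
    ∀ ℓ : ℕ, (ℓ : ℝ) ≥ (OPT : ℝ) * Real.log (2 * Etot / (P0 hstar * ε)) →
      Err (A ℓ) ≤ ε := by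
  obtain ⟨w, hw0, hw1, hwQ, hws⟩ : ∃ w : H → X → ℝ, (∀ h x, 0 ≤ w h x) ∧ (∀ h x, w h x ≤ 1) ∧
      (∀ h S, Q h S = P0 h * ∏ x ∈ S, w h x) ∧ (∀ x, w hstar x = 1) := by
    refine ⟨fun h x => if y x ≠ Real.sign (hyp h x) then
      1 / (1 + Real.exp (-(α * hyp h x * y x))) else 1, ?_, ?_, ?_, ?_⟩
    · intro h x
      dsimp only
      split_ifs <;> positivity
    · intro h x
      dsimp only
      split_ifs
      · rw [div_le_one (by positivity)]
        linarith [Real.exp_pos (-(α * hyp h x * y x))]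
      · exact le_rfl
    · intro h S
      rw [hQ, Finset.prod_filter]
    · intro x
      simp [hreal x]
  have herr0 : ∀ h, 0 ≤ err h := fun h => by rw [herr]; positivity
  have hQ0 : ∀ h S, 0 ≤ Q h S := fun h S => by
    rw [hwQ]
    exact mul_nonneg (hP0pos h).le (Finset.prod_nonneg fun x _ => hw0 h x)
  have hQanti : ∀ h {S T : Finset X}, S ⊆ T → Q h T ≤ Q h S := fun h S T hST => by
    rw [hwQ, hwQ]
    exact mul_le_mul_of_nonneg_left (aux_anti _ (hw0 h) (hw1 h) hST) (hP0pos h).le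
  have hQe : ∀ h, Q h ∅ = P0 h := fun h => by simp [hwQ]
  have hZle : ∀ S, Z S ≤ 1 := fun S => by
    rw [hZ, ← hP0sum]
    exact Finset.sum_le_sum fun h _ => by
      rw [← hQe h]; exact hQanti h (Finset.empty_subset S)
  have hZge : ∀ S, P0 hstar ≤ Z S := fun S => by
    rw [hZ]
    have h1 : Q hstar S = P0 hstar := by rw [hwQ]; simp [hws]
    rw [← h1]
    exact Finset.single_le_sum (f := fun h => Q h S) (fun h _ => hQ0 h S) (Finset.mem_univ hstar)
  have hZpos : ∀ S, 0 < Z S := fun S => lt_of_lt_of_le (hP0pos hstar) (hZge S)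
  obtain ⟨G, hG⟩ : ∃ G : Finset X → ℝ, ∀ S, G S = ∑ h, Q h S * err h := ⟨_, fun _ => rfl⟩
  have hG0 : ∀ S, 0 ≤ G S := fun S => by
    rw [hG]; exact Finset.sum_nonneg fun h _ => mul_nonneg (hQ0 h S) (herr0 h)
  have hErrG : ∀ S, Err S = G S / Z S := fun S => by
    rw [hErr, hG, Finset.sum_div]
    refine Finset.sum_congr rfl fun h _ => ?_
    rw [hP]; ring
  have hFG : ∀ S, F S = Etot - G S := fun S => by
    rw [hF, hG, hEtot, ← Finset.sum_sub_distrib]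
    refine Finset.sum_congr rfl fun h _ => ?_
    ring
  have hGe : G ∅ = Etot := by simp [hG, hEtot, hQe]
  have hGanti : ∀ {S T : Finset X}, S ⊆ T → G T ≤ G S := fun {S T} hST => by
    rw [hG, hG]
    exact Finset.sum_le_sum fun h _ => mul_le_mul_of_nonneg_right (hQanti h hST) (herr0 h)
  have hGsub : ∀ S B : Finset X, G S - G (S ∪ B) ≤ ∑ b ∈ B, (G S - G (insert b S)) := by
    intro S B
    simp only [hG, ← Finset.sum_sub_distrib]
    rw [Finset.sum_comm]
    refine Finset.sum_le_sum fun h _ => ?_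
    have := mul_le_mul_of_nonneg_left (aux_sub (w h) (hw0 h) (hw1 h) S B)
      (mul_nonneg (hP0pos h).le (herr0 h))
    rw [Finset.mul_sum] at this
    calc _ = P0 h * err h * (∏ x ∈ S, w h x - ∏ x ∈ S ∪ B, w h x) := by
          rw [hwQ, hwQ]; ring
      _ ≤ _ := this
      _ = _ := Finset.sum_congr rfl fun b _ => by rw [hwQ, hwQ]; ring
  obtain ⟨B, hBc, hBE⟩ := hOPT1
  have hGB : G B ≤ P0 hstar * ε / 2 := by
    rw [hErrG, div_le_iff₀ (hZpos B)] at hBE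
    nlinarith [hZle B]
  have hk : (0 : ℝ) < OPT := by
    rcases Nat.eq_zero_or_pos OPT with h | h
    · exfalso
      rw [h, Finset.card_eq_zero] at hBc
      rw [hBc, hGe] at hGB
      linarith
    · exact_mod_cast h
  have hk1 : (1 : ℝ) ≤ OPT := by
    have : 0 < OPT := by exact_mod_cast hk
    exact_mod_cast this
  have hstep : ∀ t, G (A t) - G B ≤ OPT * (G (A t) - G (A (t + 1))) := by
    intro t
    obtain ⟨xt, hxt, hmax⟩ := hAgreedy t
    have h1 := hGsub (A t) B
    have h2 : G (A t ∪ B) ≤ G B := hGanti Finset.subset_union_right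
    have h3 : ∑ b ∈ B, (G (A t) - G (insert b (A t))) ≤
        ∑ b ∈ B, (G (A t) - G (A (t + 1))) := by
      refine Finset.sum_le_sum fun b _ => ?_
      have := hmax b
      rw [hFG, hFG, ← hxt] at this
      linarith
    rw [Finset.sum_const, nsmul_eq_mul, hBc] at h3
    linarith
  have hdec : ∀ t : ℕ, G (A t) - G B ≤ Real.exp (-(t / OPT)) * Etot := by
    intro t
    induction t with
    | zero => simp [hA0, hGe, hG0 B]
    | succ t ih =>
      have h1 : G (A (t + 1)) - G B ≤ (1 - 1 / OPT) * (G (A t) - G B) := by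
        have := hstep t
        rw [← div_le_iff₀' hk] at this
        have e : (G (A t) - G B) / OPT = 1 / OPT * (G (A t) - G B) := by ring
        rw [e] at this
        linarith
      have h2 : (0 : ℝ) ≤ 1 - 1 / OPT := by
        rw [sub_nonneg, div_le_one hk]; exact hk1
      have h3 : (1 : ℝ) - 1 / OPT ≤ Real.exp (-(1 / OPT)) := by
        linarith [Real.add_one_le_exp (-(1 / (OPT : ℝ)))]
      calc _ ≤ _ := h1
        _ ≤ (1 - 1 / OPT) * (Real.exp (-(t / OPT)) * Etot) := mul_le_mul_of_nonneg_left ih h2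
        _ ≤ Real.exp (-(1 / OPT)) * (Real.exp (-(t / OPT)) * Etot) :=
          mul_le_mul_of_nonneg_right h3 (by positivity)
        _ = _ := by
          rw [← mul_assoc, ← Real.exp_add]
          congr 2
          push_cast
          ring
  intro l hl
  have h1 : Real.log (2 * Etot / (P0 hstar * ε)) ≤ l / OPT := by
    rw [le_div_iff₀' hk]; exact hl
  have h2 : Real.exp (-(l / OPT)) ≤ P0 hstar * ε / (2 * Etot) := by
    calc _ ≤ Real.exp (-Real.log (2 * Etot / (P0 hstar * ε))) :=
          Real.exp_le_exp.mpr (neg_le_neg h1)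
      _ = _ := by
          rw [Real.exp_neg, Real.exp_log (by positivity), inv_div]
  have h3 : Real.exp (-(l / OPT)) * Etot ≤ P0 hstar * ε / 2 := by
    calc _ ≤ P0 hstar * ε / (2 * Etot) * Etot := mul_le_mul_of_nonneg_right h2 hEpos.le
      _ = _ := by field_simp
  rw [hErrG, div_le_iff₀ (hZpos _)]
  have h4 := hdec l
  have h5 := mul_le_mul_of_nonneg_left (hZge (A l)) hε.le
  linarith
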